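/- Let Y_a, Y_{a+1}, …, Y_b (a < t* ≤ b) be jointly Gaussian random vectors with values in ℝ^d and mean zero, and let P be a d×d real matrix. Suppose: (a) Cov(Y_{t*}, Y_{t*−1}) = P·Cov(Y_{t*−1}, Y_{t*−1}) and Cov(Y_{t*−1}) is invertible; (b) for every s with a ≤ s ≤ t*−2, Y_{t*} is conditionally independent of Y_s given Y_{t*−1}; (c) for every j ≥ 1 with t*+j ≤ b and every s with a ≤ s ≤ t*−1, Cov(Y_{t*+j}, Y_s) = 0. Then for every j ≥ 0 with t*+j ≤ b and every s with a ≤ s ≤ t*−1: Cov(Y_{t*+j}, Y_s) = P·Cov(Y_{t*−1}, Y_s) if j = 0, and Cov(Y_{t*+j}, Y_s) = 0 if j ≥ 1. -/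

import Mathlib

open MeasureTheory ProbabilityTheory

/-- The cross-covariance matrix of two random vectors: entry `(i, j)` is
`E[Xᵢ Yⱼ] − E[Xᵢ] E[Yⱼ]`. -/
noncomputable def covM {Ω : Type*} [MeasurableSpace Ω] (μ : Measure Ω)
    {ι κ : Type*} (X : Ω → ι → ℝ) (Y : Ω → κ → ℝ) : Matrix ι κ ℝ :=
  Matrix.of fun i j =>
    (∫ ω, X ω i * Y ω j ∂μ) - (∫ ω, X ω i ∂μ) * (∫ ω, Y ω j ∂μ)

/-- A random vector (indexed by a finite type) is (jointly) Gaussian if every linear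
combination of its components has a Gaussian distribution on `ℝ`. -/
def IsGaussianVec {Ω : Type*} [MeasurableSpace Ω] (μ : Measure Ω)
    {ι : Type*} [Fintype ι] (X : Ω → ι → ℝ) : Prop :=
  ∀ u : ι → ℝ, ∃ (a : ℝ) (s : NNReal),
    Measure.map (fun ω => ∑ i, u i * X ω i) μ = gaussianReal a s

section Auxiliary

variable {Ω : Type*} {m mΩ : MeasurableSpace Ω} {μ : Measure Ω}

lemma IsGaussianVec.hasGaussianLaw {ι : Type*} [Fintype ι] {X : Ω → ι → ℝ}
    (h : IsGaussianVec μ X) (hX : Measurable X) : HasGaussianLaw X μ where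
  isGaussian_map := by
    classical
    refine isGaussian_of_map_eq_gaussianReal fun L => ?_
    obtain ⟨c, v, hv⟩ := h fun i => L (Pi.single i 1)
    refine ⟨c, v, ?_⟩
    rw [Measure.map_map (by fun_prop) hX, ← hv]
    congr 1
    ext ω
    conv_lhs => rw [Function.comp_apply, pi_eq_sum_univ' (X ω)]
    simp [mul_comm]

lemma covM_apply_eq_covariance [IsProbabilityMeasure μ] {ι κ : Type*} {X : Ω → ι → ℝ}
    {Y : Ω → κ → ℝ} (hX : ∀ i, MemLp (fun ω => X ω i) 2 μ) (hY : ∀ j, MemLp (fun ω => Y ω j) 2 μ)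
    (i : ι) (j : κ) :
    covM μ X Y i j = cov[fun ω => X ω i, fun ω => Y ω j; μ] := by
  rw [covariance_eq_sub (hX i) (hY j)]
  rfl

lemma covariance_sub_sum_mul_left [IsFiniteMeasure μ] {κ : Type*} [Fintype κ] {X W : Ω → ℝ}
    {Z : κ → Ω → ℝ} (hX : MemLp X 2 μ) (hZ : ∀ k, MemLp (Z k) 2 μ) (hW : MemLp W 2 μ)
    (c : κ → ℝ) :
    cov[fun ω => X ω - ∑ k, c k * Z k ω, W; μ] = cov[X, W; μ] - ∑ k, c k * cov[Z k, W; μ] := by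
  have hcZ : ∀ k, MemLp (fun ω => c k * Z k ω) 2 μ := fun k => (hZ k).const_mul _
  rw [covariance_fun_sub_left hX (memLp_finsetSum _ fun k _ => hcZ k) hW,
    covariance_fun_sum_left hcZ hW]
  simp_rw [covariance_const_mul_left]

/-- Conditionally independent random variables have multiplicative conditional expectation. -/
lemma ProbabilityTheory.CondIndepFun.condExp_mul [StandardBorelSpace Ω] [IsFiniteMeasure μ]
    {hm : m ≤ mΩ} {X W : Ω → ℝ} (h : CondIndepFun m hm X W μ)
    (hXm : Measurable X) (hWm : Measurable W) (hX : Integrable X μ) (hW : Integrable W μ)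
    (hXW : Integrable (X * W) μ) :
    μ[X * W | m] =ᵐ[μ] μ[X | m] * μ[W | m] := by
  have hker := ae_of_ae_trim hm ((condIndepFun_iff_map_prod_eq_prod_map_map hXm hWm).1 h)
  filter_upwards [hker, condExp_ae_eq_integral_condExpKernel hm hXW,
    condExp_ae_eq_integral_condExpKernel hm hX, condExp_ae_eq_integral_condExpKernel hm hW]
    with ω hω h₁ h₂ h₃
  rw [Pi.mul_apply, h₁, h₂, h₃]
  have hindep : IndepFun X W (condExpKernel μ m ω) := by
    rw [indepFun_iff_map_prod_eq_prod_map_map hXm.aemeasurable hWm.aemeasurable]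
    rwa [Kernel.prod_apply, Kernel.map_apply _ (by fun_prop), Kernel.map_apply _ hXm,
      Kernel.map_apply _ hWm] at hω
  exact hindep.integral_mul_eq_mul_integral hXm.aestronglyMeasurable hWm.aestronglyMeasurable

/-- If `X` and `W` are conditionally independent given `m` and the residual of `X` with respect to
an `m`-measurable `V` is independent of `m`, then this residual is uncorrelated with `W`. -/
lemma covariance_residual_eq_zero [StandardBorelSpace Ω] [IsProbabilityMeasure μ]
    {hm : m ≤ mΩ} {X V W : Ω → ℝ} (h : CondIndepFun m hm X W μ)
    (hXm : Measurable X) (hWm : Measurable W) (hVm : StronglyMeasurable[m] V)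
    (hX : MemLp X 2 μ) (hV : MemLp V 2 μ) (hW : MemLp W 2 μ)
    (hres : Indep (MeasurableSpace.comap (X - V) inferInstance) m μ) :
    cov[X - V, W; μ] = 0 := by
  have hXi := hX.integrable one_le_two
  have hVi := hV.integrable one_le_two
  have hWi := hW.integrable one_le_two
  have hXW : Integrable (X * W) μ := hX.integrable_mul hW
  have hVW : Integrable (V * W) μ := hV.integrable_mul hW
  have hVm' : Measurable V := hVm.measurable.mono hm le_rfl
  have hmean : μ[X - V | m] =ᵐ[μ] fun _ => μ[X - V] :=
    condExp_indep_eq (hXm.sub hVm').comap_le hm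
      (comap_measurable (X - V)).stronglyMeasurable hres
  have hprod : μ[(X - V) * W | m] =ᵐ[μ] fun ω => μ[X - V] * (μ[W | m]) ω := by
    rw [sub_mul]
    filter_upwards [condExp_sub hXW hVW m, condExp_sub hXi hVi m, hmean,
      h.condExp_mul hXm hWm hXi hWi hXW, condExp_mul_of_stronglyMeasurable_left hVm hVW hWi]
      with ω h₁ h₂ h₃ h₄ h₅
    have hV' : (μ[V | m]) ω = V ω := by rw [condExp_of_stronglyMeasurable hm hVm hVi]
    rw [h₁, Pi.sub_apply, h₄, h₅, ← h₃, h₂, Pi.sub_apply, Pi.mul_apply, Pi.mul_apply, hV']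
    ring
  rw [covariance_eq_sub (hX.sub hV) hW, ← integral_condExp hm, integral_congr_ae hprod,
    integral_const_mul, integral_condExp hm, sub_self]

/-- For jointly Gaussian `X` and `Z` whose linear regression of `X` on `Z` has coefficient
matrix `P`, conditional independence of `X` and `W` given `Z` propagates the regression
to the covariances with `W`. -/
lemma covM_eq_mul_of_condIndepFun [StandardBorelSpace Ω] [IsProbabilityMeasure μ]
    {ι κ ρ : Type*} [Fintype ι] [Fintype κ] {X : Ω → ι → ℝ} {Z : Ω → κ → ℝ} {W : Ω → ρ → ℝ}
    (hXZ : HasGaussianLaw (fun ω => (X ω, Z ω)) μ)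
    (hXm : Measurable X) (hZm : Measurable Z) (hWm : Measurable W)
    (hW : ∀ j, MemLp (fun ω => W ω j) 2 μ) {P : Matrix ι κ ℝ}
    (hP : covM μ X Z = P * covM μ Z Z)
    (h : CondIndepFun (MeasurableSpace.comap Z inferInstance) hZm.comap_le X W μ) :
    covM μ X W = P * covM μ Z W := by
  have hX : ∀ i, MemLp (fun ω => X ω i) 2 μ := fun i => (hXZ.fst.eval i).memLp_two
  have hZ : ∀ k, MemLp (fun ω => Z ω k) 2 μ := fun k => (hXZ.snd.eval k).memLp_two
  have hres : IndepFun (fun ω i => X ω i - ∑ k, P i k * Z ω k) (fun ω k => Z ω k) μ := by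
    refine HasGaussianLaw.indepFun_of_covariance_eval
      (X := fun i ω => X ω i - ∑ k, P i k * Z ω k) (Y := fun k ω => Z ω k) ?_ fun i j => ?_
    · convert! hXZ.map ((ContinuousLinearMap.fst ℝ (ι → ℝ) (κ → ℝ) -
        P.mulVecLin.toContinuousLinearMap ∘L ContinuousLinearMap.snd ℝ (ι → ℝ) (κ → ℝ)).prod
        (ContinuousLinearMap.snd ℝ (ι → ℝ) (κ → ℝ))) using 1
    · rw [covariance_sub_sum_mul_left (hX i) hZ (hZ j), ← covM_apply_eq_covariance hX hZ, hP,
        Matrix.mul_apply]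
      simp_rw [covM_apply_eq_covariance hZ hZ, sub_self]
  ext i j
  rw [Matrix.mul_apply, covM_apply_eq_covariance hX hW]
  simp_rw [covM_apply_eq_covariance hZ hW]
  rw [← sub_eq_zero, ← covariance_sub_sum_mul_left (hX i) hZ (hW j)]
  refine covariance_residual_eq_zero (V := fun ω => ∑ k, P i k * Z ω k)
    (h.comp (measurable_pi_apply i) (measurable_pi_apply j))
    ((measurable_pi_apply i).comp hXm) ((measurable_pi_apply j).comp hWm) ?_
    (hX i) (memLp_finsetSum _ fun k _ => (hZ k).const_mul _) (hW j) ?_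
  · have hf : Measurable fun z : κ → ℝ => ∑ k, P i k * z k := by fun_prop
    exact (hf.comp (comap_measurable Z)).stronglyMeasurable
  · exact hres.comp (measurable_pi_apply i) measurable_id

end Auxiliary

/-- Around a regime switch at time `t*`, Conditions 3(a)–(c) imply that the
cross-covariances between post-switch and pre-switch observations are `P` times the lagged
covariances of the last pre-switch observation for the first post-switch observation, and
zero for all later ones. -/
theorem regime_switch_cross_cov_blocks
    {Ω : Type*} [MeasurableSpace Ω] [StandardBorelSpace Ω]
    (Pr : Measure Ω) [IsProbabilityMeasure Pr]
    {d : ℕ} (a b tstar : ℕ) (hab : a < tstar) (htb : tstar ≤ b)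
    (Y : ℕ → Ω → Fin d → ℝ) (hYm : ∀ t, Measurable (Y t))
    (hGauss : IsGaussianVec Pr
      (fun ω (q : Fin (b - a + 1) × Fin d) => Y (a + (q.1 : ℕ)) ω q.2))
    (hmean : ∀ t, a ≤ t → t ≤ b → ∀ i, ∫ ω, Y t ω i ∂Pr = 0)
    (P : Matrix (Fin d) (Fin d) ℝ)
    (ha : covM Pr (Y tstar) (Y (tstar - 1))
        = P * covM Pr (Y (tstar - 1)) (Y (tstar - 1)))
    (hainv : IsUnit (covM Pr (Y (tstar - 1)) (Y (tstar - 1))))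
    (hb : ∀ s, a ≤ s → s + 2 ≤ tstar →
      CondIndepFun (MeasurableSpace.comap (Y (tstar - 1)) inferInstance)
        ((hYm _).comap_le) (Y tstar) (Y s) Pr)
    (hc : ∀ j, 1 ≤ j → tstar + j ≤ b → ∀ s, a ≤ s → s + 1 ≤ tstar →
      covM Pr (Y (tstar + j)) (Y s) = 0) :
    ∀ j, tstar + j ≤ b → ∀ s, a ≤ s → s + 1 ≤ tstar →
      (j = 0 → covM Pr (Y tstar) (Y s) = P * covM Pr (Y (tstar - 1)) (Y s)) ∧
      (1 ≤ j → covM Pr (Y (tstar + j)) (Y s) = 0) := by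
  have hG := hGauss.hasGaussianLaw (by fun_prop)
  have hproj : ∀ t, a ≤ t → t ≤ b → ∃ q : Fin (b - a + 1), a + (q : ℕ) = t := fun t h₁ h₂ =>
    ⟨⟨t - a, by lia⟩, by simp; lia⟩
  have hL2 : ∀ t, a ≤ t → t ≤ b → ∀ i, MemLp (fun ω => Y t ω i) 2 Pr := by
    intro t h₁ h₂ i
    obtain ⟨q, rfl⟩ := hproj t h₁ h₂
    exact (hG.eval (q, i)).memLp_two
  have hpair : HasGaussianLaw (fun ω => (Y tstar ω, Y (tstar - 1) ω)) Pr := by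
    obtain ⟨q, hq⟩ := hproj tstar hab.le htb
    obtain ⟨r, hr⟩ := hproj (tstar - 1) (by lia) (by lia)
    rw [← hr, ← hq]
    exact hG.map ((ContinuousLinearMap.pi fun i => ContinuousLinearMap.proj (q, i)).prod
      (ContinuousLinearMap.pi fun i => ContinuousLinearMap.proj (r, i)))
  refine fun j hj s has hs => ⟨fun _ => ?_, fun hj1 => hc j hj1 hj s has hs⟩
  rcases Nat.lt_or_ge tstar (s + 2) with hlt | hle
  · obtain rfl : s = tstar - 1 := by lia
    exact ha
  · exact covM_eq_mul_of_condIndepFun hpair (hYm _) (hYm _) (hYm _) (hL2 s has (by lia)) ha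
      (hb s has hle)
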